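/- arXiv:0801.0711 — 4 statements merged into one kernel-verified Lean document; each statement's English description precedes it below -/
import Mathlib

section
/- For every integer k ≥ 1, ι(t·G_{2k−1}) = (−1)^{k+1}·( (4k/(2k−1))·G_{2k} + t·G_{2k−1} ) in ℚ[t,v]. -/
open MvPolynomial

/-- The variable `s` (weight 2). -/
noncomputable def s : MvPolynomial (Fin 2) ℚ := X 0
/-- The variable `t` (weight 1). -/
noncomputable def t : MvPolynomial (Fin 2) ℚ := X 1

/-- `f k` is the weighted-degree-`k` homogeneous part of `log (1+s+t)`, where `s` has
weight 2 and `t` weight 1: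
`f k = ∑_{2a+b = k, a+b ≥ 1} ((-1)^(a+b-1)/(a+b)) ⬝ C(a+b,a) ⬝ s^a t^b`. -/
noncomputable def f (k : ℕ) : MvPolynomial (Fin 2) ℚ :=
  ∑ a ∈ Finset.range (k / 2 + 1),
    C (((-1 : ℚ) ^ (k - a - 1) / (k - a : ℚ)) * ((k - a).choose a : ℚ)) *
      s ^ a * t ^ (k - 2 * a)

/-- In `ℚ[t,v]` (with `t = X 0`, `v = X 1`), `G k` is obtained from `f k` by substituting
`s = (t² + v²)/4` and keeping `t`. -/
noncomputable def G (k : ℕ) : MvPolynomial (Fin 2) ℚ :=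
  aeval ![C (1/4 : ℚ) * ((X 0) ^ 2 + (X 1) ^ 2), X 0] (f k)

/-- The `ℚ`-algebra endomorphism `ι` of `ℚ[t,v]` with `ι t = -v`, `ι v = t`. -/
noncomputable def iota : MvPolynomial (Fin 2) ℚ →ₐ[ℚ] MvPolynomial (Fin 2) ℚ :=
  aeval ![-(X 1), X 0]

/-!
If `α + β = t` and `αβ = s`, then `1 + s + t = (1 + α)(1 + β)`, so `f n` is `(-1)^(n+1)/n` times the
power sum `α^n + β^n`, which is the Dickson polynomial `D_n` with parameter `s` evaluated at `t`.
For `s = (t² + v²)/4` one has `α, β = (t ± iv)/2`, and `ι` sends `α ↦ iα`, `β ↦ -iβ`. This can be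
exploited without leaving `ℚ`: `ι` fixes `s` and negates `α² + β² = t² - 2s`, so it multiplies
`D_{2j}` by `(-1)^j`, because the even-indexed Dickson polynomials obey the recurrence with
coefficients `t² - 2s` and `s²`. For odd index use `t D_{2j+1} = D_{2j+2} + s D_{2j}`.
-/

open Polynomial (dickson)

section Dickson

variable {R S : Type*} [CommRing R] [CommRing S]

lemma eval_dickson_add_two (k : ℕ) (a x : R) (n : ℕ) :
    (dickson k a (n + 2)).eval x =
      x * (dickson k a (n + 1)).eval x - a * (dickson k a n).eval x := by
  simp

lemma map_eval_dickson (φ : R →+* S) (k : ℕ) (a x : R) (n : ℕ) :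
    φ ((dickson k a n).eval x) = (dickson k (φ a) n).eval (φ x) := by
  rw [← Polynomial.map_dickson, Polynomial.eval_map_apply]

lemma eval_dickson_add_four (k : ℕ) (a x : R) (n : ℕ) :
    (dickson k a (n + 4)).eval x =
      (x ^ 2 - 2 * a) * (dickson k a (n + 2)).eval x - a ^ 2 * (dickson k a n).eval x := by
  have h₂ := eval_dickson_add_two k a x n
  have h₃ := eval_dickson_add_two k a x (n + 1)
  have h₄ := eval_dickson_add_two k a x (n + 2)
  linear_combination h₄ + x * h₃ + a * h₂

lemma eval_dickson_two_mul {a x y : R} (h : x ^ 2 + y ^ 2 = 4 * a) (j : ℕ) :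
    (dickson 1 a (2 * j)).eval y = (-1) ^ j * (dickson 1 a (2 * j)).eval x := by
  induction j using Nat.twoStepInduction with
  | zero => simp
  | one =>
    simp only [mul_one, Polynomial.dickson_two, Polynomial.eval_sub, Polynomial.eval_mul,
      Polynomial.eval_pow, Polynomial.eval_X, Polynomial.eval_C, Polynomial.eval_ofNat,
      Nat.cast_one, Polynomial.eval_one]
    linear_combination h
  | more j ih₀ ih₁ =>
    rw [show 2 * (j + 1) = 2 * j + 2 by ring] at ih₁
    rw [show 2 * (j + 2) = 2 * j + 4 by ring, eval_dickson_add_four, eval_dickson_add_four,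
      ih₀, ih₁]
    linear_combination (-1) ^ (j + 1) * (dickson 1 a (2 * j + 2)).eval x * h

lemma mul_eval_dickson_two_mul_add_one {a x y : R} (h : x ^ 2 + y ^ 2 = 4 * a) (j : ℕ) :
    y * (dickson 1 a (2 * j + 1)).eval y =
      (-1) ^ j * (x * (dickson 1 a (2 * j + 1)).eval x - 2 * (dickson 1 a (2 * j + 2)).eval x) := by
  have even₀ := eval_dickson_two_mul h j
  have even₁ : (dickson 1 a (2 * j + 2)).eval y =
      (-1) ^ (j + 1) * (dickson 1 a (2 * j + 2)).eval x :=
    eval_dickson_two_mul h (j + 1)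
  have recX := eval_dickson_add_two 1 a x (2 * j)
  have recY := eval_dickson_add_two 1 a y (2 * j)
  linear_combination even₁ + a * even₀ - recY + (-1) ^ j * recX

end Dickson

/-- The Lucas triangle: Pascal's recurrence with apex `2` in place of `1`, the remaining entries of
the left edge being `1`. Its entries are, up to sign, the coefficients of the Dickson polynomials
of the first kind. -/
def lucasTriangle : ℕ → ℕ → ℕ
  | 0, 0 => 2
  | 0, _ + 1 => 0
  | _ + 1, 0 => 1
  | m + 1, i + 1 => lucasTriangle m i + lucasTriangle m (i + 1)

namespace lucasTriangle

lemma eq_zero_of_lt : ∀ {m i : ℕ}, m < i → lucasTriangle m i = 0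
  | 0, _ + 1, _ => rfl
  | m + 1, i + 1, h => by
    rw [lucasTriangle, eq_zero_of_lt (by lia : m < i), eq_zero_of_lt (by lia : m < i + 1)]

lemma succ_succ_eq_choose_add_choose (m i : ℕ) :
    lucasTriangle (m + 1) (i + 1) = (m + 1).choose (i + 1) + m.choose i := by
  induction m generalizing i with
  | zero => cases i <;> simp [lucasTriangle, Nat.choose_succ_succ]
  | succ m ih =>
    rw [lucasTriangle, ih]
    cases i with
    | zero =>
      simp only [lucasTriangle, zero_add, Nat.choose_one_right, Nat.choose_zero_right]
      lia
    | succ i =>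
      rw [ih, Nat.choose_succ_succ (m + 1) (i + 1), Nat.choose_succ_succ m i]
      ring

lemma mul_eq_add_mul_choose (m i : ℕ) :
    m * lucasTriangle m i = (m + i) * m.choose i := by
  match m, i with
  | 0, 0 => rfl
  | 0, i + 1 => simp
  | m + 1, 0 => simp [lucasTriangle]
  | m + 1, i + 1 =>
    rw [succ_succ_eq_choose_add_choose]
    linear_combination Nat.add_one_mul_choose_eq m i

end lucasTriangle

open Finset in
lemma eval_dickson_one_eq_sum {R : Type*} [CommRing R] (a x : R) (n : ℕ) :
    (dickson 1 a n).eval x =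
      ∑ p ∈ antidiagonal n, (lucasTriangle p.1 p.2 : R) * (-a) ^ p.2 * x ^ (p.1 - p.2) := by
  induction n using Nat.twoStepInduction with
  | zero => norm_num [lucasTriangle]
  | one => simp [lucasTriangle, Nat.antidiagonal_succ]
  | more n ih₀ ih₁ =>
    have shift (m i : ℕ) : (lucasTriangle m (i + 1) : R) * x ^ (m - i) =
        x * (lucasTriangle m (i + 1) * x ^ (m - (i + 1))) := by
      rcases lt_or_ge i m with h | h
      · rw [show m - i = m - (i + 1) + 1 by lia]
        ring
      · simp [lucasTriangle.eq_zero_of_lt (Nat.lt_succ_of_le h)]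
    have pascal (p : ℕ × ℕ) :
        (lucasTriangle (p.1 + 1) (p.2 + 1) : R) * (-a) ^ (p.2 + 1) *
            x ^ (p.1 + 1 - (p.2 + 1)) =
          x * (lucasTriangle p.1 (p.2 + 1) * (-a) ^ (p.2 + 1) * x ^ (p.1 - (p.2 + 1))) -
            a * (lucasTriangle p.1 p.2 * (-a) ^ p.2 * x ^ (p.1 - p.2)) := by
      rw [lucasTriangle, Nat.add_sub_add_right]
      push_cast
      linear_combination (-a) ^ (p.2 + 1) * shift p.1 p.2
    rw [eval_dickson_add_two, ih₀, ih₁, Nat.sum_antidiagonal_succ', Nat.sum_antidiagonal_succ,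
      Nat.sum_antidiagonal_succ']
    simp only [pascal, sum_sub_distrib, ← mul_sum]
    simp only [lucasTriangle, Nat.cast_zero, Nat.cast_one, pow_zero, Nat.sub_zero]
    ring

open Finset in
lemma eval_dickson_one_eq_sum_range {R : Type*} [CommRing R] (a x : R) (n : ℕ) :
    (dickson 1 a n).eval x =
      ∑ i ∈ range (n / 2 + 1), (lucasTriangle (n - i) i : R) * (-a) ^ i * x ^ (n - 2 * i) := by
  have vanish : ∀ i ∈ range (n + 1), i ∉ range (n / 2 + 1) →
      (lucasTriangle (n - i) i : R) * (-a) ^ i * x ^ (n - 2 * i) = 0 := by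
    intro i _ hi
    rw [mem_range] at hi
    rw [lucasTriangle.eq_zero_of_lt (by lia), Nat.cast_zero, zero_mul, zero_mul]
  rw [eval_dickson_one_eq_sum, ← Nat.sum_antidiagonal_swap,
    Nat.sum_antidiagonal_eq_sum_range_succ_mk, sum_subset (range_mono (by lia)) vanish]
  refine sum_congr rfl fun i _ => ?_
  rw [Prod.fst_swap, Prod.snd_swap, Nat.sub_sub, ← two_mul]

-- At `m = i = 0` both sides vanish, by division by zero.
lemma neg_one_pow_div_mul_choose_eq_lucasTriangle (m i : ℕ) :
    (-1 : ℚ) ^ (m - 1) / m * m.choose i =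
      (-1) ^ (m + i + 1) / (m + i) * (lucasTriangle m i * (-1) ^ i) := by
  cases m with
  | zero => cases i <;> simp [lucasTriangle]
  | succ m =>
    have h : ((m + 1 : ℕ) : ℚ) * lucasTriangle (m + 1) i = ((m + 1 : ℕ) + i) * (m + 1).choose i :=
      mod_cast lucasTriangle.mul_eq_add_mul_choose (m + 1) i
    have sign : (-1 : ℚ) ^ i * (-1) ^ i = 1 := by rw [← mul_pow]; norm_num
    have : ((m + 1 : ℕ) : ℚ) + i ≠ 0 := by positivity
    rw [Nat.add_sub_cancel, pow_add, pow_add, pow_add]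
    field_simp
    linear_combination -h - (m + 1 : ℕ) * lucasTriangle (m + 1) i * sign

lemma f_eq_dickson (n : ℕ) :
    f n = C ((-1 : ℚ) ^ (n + 1) / n) * (dickson 1 s n).eval t := by
  rw [eval_dickson_one_eq_sum_range, f, Finset.mul_sum]
  refine Finset.sum_congr rfl fun a ha => ?_
  obtain ⟨m, rfl⟩ : ∃ m, n = m + a := ⟨n - a, by grind⟩
  have coeff := neg_one_pow_div_mul_choose_eq_lucasTriangle m a
  rw [← C_inj (σ := Fin 2)] at coeff
  rw [Nat.add_sub_cancel]
  push_cast [map_mul, map_pow, map_neg, map_one, map_natCast, neg_pow s] at coeff ⊢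
  rw [add_sub_cancel_right]
  linear_combination s ^ a * t ^ (m + a - 2 * a) * coeff

/-- The value `(t² + v²)/4` substituted for `s` in `G`, as an element of `ℚ[t,v]`. -/
noncomputable def quarterSqSum : MvPolynomial (Fin 2) ℚ :=
  C (1 / 4) * (X 0 ^ 2 + X 1 ^ 2)

lemma four_mul_quarterSqSum : 4 * quarterSqSum = X 0 ^ 2 + X 1 ^ 2 := by
  have : (4 : MvPolynomial (Fin 2) ℚ) * C (1 / 4) = 1 := by
    rw [← map_ofNat C 4, ← C_mul]
    norm_num
  rw [quarterSqSum, ← mul_assoc, this, one_mul]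

lemma iota_X_zero : iota (X 0) = -X 1 := by
  simp [iota]

lemma iota_quarterSqSum : iota quarterSqSum = quarterSqSum := by
  simp [quarterSqSum, iota, add_comm]

lemma G_eq_dickson (n : ℕ) :
    G n = C ((-1 : ℚ) ^ (n + 1) / n) * (dickson 1 quarterSqSum n).eval (X 0) := by
  rw [G, f_eq_dickson, map_mul, algHom_C, algebraMap_eq]
  congr 1
  rw [← AlgHom.coe_toRingHom, map_eval_dickson]
  simp [s, t, quarterSqSum]

lemma iota_G (n : ℕ) :
    iota (G n) = C ((-1 : ℚ) ^ (n + 1) / n) * (dickson 1 quarterSqSum n).eval (-X 1) := by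
  rw [G_eq_dickson, map_mul, algHom_C, algebraMap_eq, ← AlgHom.coe_toRingHom, map_eval_dickson,
    AlgHom.coe_toRingHom, iota_X_zero, iota_quarterSqSum]

lemma iota_X_zero_mul_G_two_mul_add_one (j : ℕ) :
    iota (X 0 * G (2 * j + 1)) =
      (-1) ^ j * (X 0 * G (2 * j + 1) -
        2 * C ((-1 : ℚ) ^ (2 * j + 2) / (2 * j + 1 : ℕ)) *
          (dickson 1 quarterSqSum (2 * j + 2)).eval (X 0)) := by
  have circle : X 0 ^ 2 + (-X 1) ^ 2 = 4 * quarterSqSum := by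
    rw [four_mul_quarterSqSum, neg_sq]
  rw [map_mul, iota_X_zero, iota_G, G_eq_dickson]
  linear_combination C ((-1 : ℚ) ^ (2 * j + 2) / (2 * j + 1 : ℕ)) *
    mul_eval_dickson_two_mul_add_one circle j

lemma C_mul_G_succ (n : ℕ) :
    C (((n + 1 : ℕ) : ℚ) / n) * G (n + 1) =
      -C ((-1 : ℚ) ^ (n + 1) / n) * (dickson 1 quarterSqSum (n + 1)).eval (X 0) := by
  rw [G_eq_dickson, ← mul_assoc, ← C_mul, ← C_neg]
  congr 2
  have : ((n + 1 : ℕ) : ℚ) ≠ 0 := by positivity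
  field_simp
  ring

theorem stmt3 (k : ℕ) (hk : 1 ≤ k) :
    iota (X 0 * G (2 * k - 1)) =
      C ((-1 : ℚ) ^ (k + 1)) *
        (C ((4 * (k : ℚ)) / (2 * (k : ℚ) - 1)) * G (2 * k) + X 0 * G (2 * k - 1)) := by
  obtain ⟨j, rfl⟩ : ∃ j, k = j + 1 := ⟨k - 1, by lia⟩
  have index : 2 * (j + 1) - 1 = 2 * j + 1 := by lia
  have coeff : 4 * ((j + 1 : ℕ) : ℚ) / (2 * (j + 1 : ℕ) - 1) =
      2 * (((2 * j + 1 + 1 : ℕ) : ℚ) / (2 * j + 1 : ℕ)) := by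
    push_cast
    ring
  have even := C_mul_G_succ (2 * j + 1)
  rw [index, mul_add_one, iota_X_zero_mul_G_two_mul_add_one, coeff]
  simp only [map_mul, map_pow, map_neg, map_one, map_ofNat]
  linear_combination (-1) ^ (j + 1) * 2 * even
end

section
/- For every integer r with 0 ≤ 2r ≤ n, the element π_{2r,r} := (−1)^r·(2n−4r+1)!!·Σ_{i=0}^{r} (−1)^i·((2r−2i−1)!!/(2n−2r−2i+1)!!)·e_{2r,i} of M is primitive, i.e. Λ π_{2r,r} = 0. -/
/-- Valid basis indices: pairs `(k,p)` of integers with `0 ≤ p` and `2p ≤ k`. -/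
def Idx : Type := { x : ℤ × ℤ // 0 ≤ x.2 ∧ 2 * x.2 ≤ x.1 }

/-- The free real vector space on the basis `{e_{k,p} : 0 ≤ 2p ≤ k}`. -/
abbrev M : Type := Idx →₀ ℝ

/-- The basis vector `e_{k,p}`, with the convention that it is `0` for invalid indices. -/
noncomputable def e (k p : ℤ) : M :=
  if h : 0 ≤ p ∧ 2 * p ≤ k then Finsupp.single ⟨(k, p), h⟩ 1 else 0

/-- `L e_{k,p} = (k - 2p + 1) e_{k+1,p}`. -/
noncomputable def opL : M →ₗ[ℝ] M :=
  Finsupp.lsum ℝ fun v => LinearMap.toSpanSingleton ℝ M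
    (((v.1.1 - 2 * v.1.2 + 1 : ℤ) : ℝ) • e (v.1.1 + 1) v.1.2)

/-- `Λ e_{k,p} = (2n - 2p - k + 1) e_{k-1,p} + (k - 2p + 1) e_{k-1,p-1}`. -/
noncomputable def opLam (n : ℕ) : M →ₗ[ℝ] M :=
  Finsupp.lsum ℝ fun v => LinearMap.toSpanSingleton ℝ M
    ((((2 * (n : ℤ) - 2 * v.1.2 - v.1.1 + 1 : ℤ) : ℝ)) • e (v.1.1 - 1) v.1.2 +
      (((v.1.1 - 2 * v.1.2 + 1 : ℤ) : ℝ)) • e (v.1.1 - 1) (v.1.2 - 1))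

/-- `H e_{k,p} = (2k - 2n) e_{k,p}`. -/
noncomputable def opH (n : ℕ) : M →ₗ[ℝ] M :=
  Finsupp.lsum ℝ fun v => LinearMap.toSpanSingleton ℝ M
    (((2 * v.1.1 - 2 * (n : ℤ) : ℤ) : ℝ) • e v.1.1 v.1.2)

/-- The primitive element
`π_{2r,r} = (-1)^r (2n-4r+1)!! ∑_{i=0}^r (-1)^i ((2r-2i-1)!!/(2n-2r-2i+1)!!) e_{2r,i}`.
(Note `(2r-2i-1)` is truncated natural subtraction, so for `i = r` the numerator is
`0‼ = 1`, matching the convention `(-1)!! = 1`.) -/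
noncomputable def piBase (n r : ℕ) : M :=
  ((-1 : ℝ) ^ r * (Nat.doubleFactorial (2 * n - 4 * r + 1) : ℝ)) •
    ∑ i ∈ Finset.range (r + 1),
      ((-1 : ℝ) ^ i * (Nat.doubleFactorial (2 * r - 2 * i - 1) : ℝ) /
          (Nat.doubleFactorial (2 * n - 2 * r - 2 * i + 1) : ℝ)) •
        e (2 * r : ℤ) (i : ℤ)

/-!
`Λ` sends `e_{k,p}` into the span of `e_{k-1,p}` and `e_{k-1,p-1}`, so `Λ (∑ i ≤ m, a i • e_{k,i})`
has `e_{k-1,i}`-coefficient `a i * (2n - 2i - k + 1) + a (i + 1) * (k - 2i - 1)` for `i < m`,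
together with one boundary term along `e_{k-1,m}`, which is `0` when `k ≤ 2m`. For `k = 2r` and
`m = r`, the quotients of double factorials defining `π_{2r,r}` solve the resulting two-term
recurrence.
-/

section Basis

variable {k p : ℤ}

theorem e_of_mem (h : 0 ≤ p ∧ 2 * p ≤ k) : e k p = Finsupp.single ⟨(k, p), h⟩ 1 :=
  dif_pos h

theorem e_of_neg (hp : p < 0) : e k p = 0 :=
  dif_neg fun h => hp.not_ge h.1

theorem e_of_lt_two_mul (hk : k < 2 * p) : e k p = 0 :=
  dif_neg fun h => hk.not_ge h.2

end Basis

section Lambda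

variable (n : ℕ)

theorem opLam_single (v : Idx) :
    opLam n (Finsupp.single v 1) =
      ((2 * (n : ℤ) - 2 * v.1.2 - v.1.1 + 1 : ℤ) : ℝ) • e (v.1.1 - 1) v.1.2 +
        ((v.1.1 - 2 * v.1.2 + 1 : ℤ) : ℝ) • e (v.1.1 - 1) (v.1.2 - 1) :=
  (Finsupp.lsum_single ..).trans (one_smul ..)

theorem opLam_e (k p : ℤ) :
    opLam n (e k p) =
      (2 * n - 2 * p - k + 1 : ℝ) • e (k - 1) p + (k - 2 * p + 1 : ℝ) • e (k - 1) (p - 1) := by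
  rcases lt_or_ge p 0 with hp | hp
  · simp [e_of_neg hp, e_of_neg (show p - 1 < 0 by lia)]
  rcases le_or_gt (2 * p) k with hk | hk
  · rw [e_of_mem ⟨hp, hk⟩]
    refine (opLam_single n _).trans ?_
    push_cast
    rfl
  rw [e_of_lt_two_mul hk, e_of_lt_two_mul (show k - 1 < 2 * p by lia), map_zero, smul_zero,
    zero_add]
  rcases (Int.add_one_le_of_lt hk).eq_or_lt with hk_eq | hk_lt
  · -- `e (k - 1) (p - 1)` can be nonzero here, but its coefficient vanishes.
    have hcoeff : (k - 2 * p + 1 : ℝ) = 0 := by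
      have : (k + 1 : ℝ) = 2 * p := mod_cast hk_eq
      linarith
    rw [hcoeff, zero_smul]
  · rw [e_of_lt_two_mul (show k - 1 < 2 * (p - 1) by lia), smul_zero]

theorem opLam_sum_range_succ (k : ℤ) (a : ℕ → ℝ) (m : ℕ) :
    opLam n (∑ i ∈ Finset.range (m + 1), a i • e k i) =
      ∑ i ∈ Finset.range m,
          (a i * (2 * n - 2 * i - k + 1) + a (i + 1) * (k - 2 * i - 1)) • e (k - 1) i +
        (a m * (2 * n - 2 * m - k + 1)) • e (k - 1) m := by
  induction m with
  | zero => simp [opLam_e, e_of_neg, smul_smul]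
  | succ m ih =>
    rw [Finset.sum_range_succ, map_add, ih, Finset.sum_range_succ, map_smul, opLam_e]
    push_cast
    rw [add_sub_cancel_right]
    module

variable {n}

theorem opLam_sum_range_succ_eq_zero {k : ℤ} {a : ℕ → ℝ} {m : ℕ} (hk : k ≤ 2 * m)
    (ha : ∀ i < m, a i * (2 * n - 2 * i - k + 1) + a (i + 1) * (k - 2 * i - 1) = 0) :
    opLam n (∑ i ∈ Finset.range (m + 1), a i • e k i) = 0 := by
  have hboundary : e (k - 1) m = 0 := e_of_lt_two_mul (by lia)
  rw [opLam_sum_range_succ, hboundary, smul_zero, add_zero]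
  refine Finset.sum_eq_zero fun i hi => ?_
  rw [ha i (Finset.mem_range.mp hi), zero_smul]

end Lambda

/-- The coefficient of `e_{2r,i}` in `π_{2r,r}`, without the normalizing factor
`(-1)^r (2n-4r+1)!!` that does not depend on `i`. For `i = r` the truncated subtraction gives
`0‼ = 1`, in agreement with `(-1)!! = 1`. -/
noncomputable def piCoeff (n r i : ℕ) : ℝ :=
  (-1 : ℝ) ^ i * (Nat.doubleFactorial (2 * r - 2 * i - 1) : ℝ) /
    (Nat.doubleFactorial (2 * n - 2 * r - 2 * i + 1) : ℝ)

theorem piBase_eq_smul_sum (n r : ℕ) :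
    piBase n r =
      ((-1 : ℝ) ^ r * (Nat.doubleFactorial (2 * n - 4 * r + 1) : ℝ)) •
        ∑ i ∈ Finset.range (r + 1), piCoeff n r i • e (2 * r : ℤ) i :=
  rfl

open scoped Nat in
theorem piCoeff_recurrence {n r i : ℕ} (hir : i < r) (hn : r + i < n) :
    piCoeff n r i * (2 * n - 2 * i - 2 * r + 1) +
      piCoeff n r (i + 1) * (2 * r - 2 * i - 1) = 0 := by
  obtain ⟨s, rfl⟩ := Nat.exists_eq_add_of_lt hir
  obtain ⟨t, rfl⟩ := Nat.exists_eq_add_of_lt hn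
  have hnum : 2 * (i + s + 1) - 2 * i - 1 = 2 * s + 1 := by lia
  have hnum' : 2 * (i + s + 1) - 2 * (i + 1) - 1 = 2 * s - 1 := by lia
  have hden : 2 * (i + s + 1 + i + t + 1) - 2 * (i + s + 1) - 2 * i + 1 = 2 * t + 1 + 2 := by lia
  have hden' : 2 * (i + s + 1 + i + t + 1) - 2 * (i + s + 1) - 2 * (i + 1) + 1 = 2 * t + 1 := by
    lia
  have hpos : ((2 * t + 1)‼ : ℝ) ≠ 0 := mod_cast (Nat.doubleFactorial_pos _).ne'
  rw [piCoeff, piCoeff, hnum, hnum', hden, hden', Nat.doubleFactorial_add_two,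
    Nat.doubleFactorial_add_one]
  push_cast
  field_simp
  ring

theorem stmt12 (n r : ℕ) (hr : 2 * r ≤ n) : opLam n (piBase n r) = 0 := by
  have hsum : opLam n (∑ i ∈ Finset.range (r + 1), piCoeff n r i • e (2 * r : ℤ) i) = 0 := by
    refine opLam_sum_range_succ_eq_zero le_rfl fun i hi => ?_
    push_cast
    exact piCoeff_recurrence hi (by lia)
  rw [piBase_eq_smul_sum, map_smul, hsum, smul_zero]
end

section
/- For all integers r, k with 0 ≤ 2r ≤ n and k ≥ 2r one has π_{k,r} = (−1)^r·(2n−4r+1)!!·Σ_{i=0}^{r} (−1)^i·((k−2i)!/(2r−2i)!)·((2r−2i−1)!!/(2n−2r−2i+1)!!)·e_{k,i} in M. -/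
/-- `π_{k,r} := L^(k-2r) π_{2r,r}`. -/
noncomputable def piElt (n k r : ℕ) : M := (opL ^ (k - 2 * r)) (piBase n r)

theorem ascPochhammer_eval_natCast_add_one {K : Type*} [Semifield K] [CharZero K] (d m : ℕ) :
    (ascPochhammer K m).eval ((d : K) + 1) =
      ((d + m).factorial : K) / (d.factorial : K) := by
  rw [eq_div_iff (Nat.cast_ne_zero.mpr d.factorial_ne_zero), mul_comm,
    factorial_mul_ascPochhammer]

theorem e_eq_single (v : Idx) : e v.1.1 v.1.2 = Finsupp.single v 1 :=
  dif_pos v.2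

theorem e_eq_zero {k p : ℤ} (h : ¬(0 ≤ p ∧ 2 * p ≤ k)) : e k p = 0 :=
  dif_neg h

theorem opL_e_of_idx (v : Idx) :
    opL (e v.1.1 v.1.2) = ((v.1.1 - 2 * v.1.2 + 1 : ℤ) : ℝ) • e (v.1.1 + 1) v.1.2 := by
  rw [e_eq_single, opL, Finsupp.lsum_single, LinearMap.toSpanSingleton_apply, one_smul]

theorem opL_e (k p : ℤ) : opL (e k p) = ((k - 2 * p + 1 : ℤ) : ℝ) • e (k + 1) p := by
  by_cases h : 0 ≤ p ∧ 2 * p ≤ k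
  · exact opL_e_of_idx ⟨(k, p), h⟩
  · rw [e_eq_zero h, map_zero]
    -- `e (k + 1) p` can be a basis vector only for `k + 1 = 2 * p`, where the coefficient is `0`.
    by_cases hk : k - 2 * p + 1 = 0
    · rw [hk, Int.cast_zero, zero_smul]
    · rw [e_eq_zero (by omega), smul_zero]

theorem opL_pow_e (m : ℕ) (k p : ℤ) :
    (opL ^ m) (e k p) =
      (ascPochhammer ℝ m).eval ((k - 2 * p + 1 : ℤ) : ℝ) • e (k + m) p := by
  induction m with
  | zero => simp
  | succ m ih =>
    have hcoeff : ((k + m - 2 * p + 1 : ℤ) : ℝ) = ((k - 2 * p + 1 : ℤ) : ℝ) + m := by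
      push_cast
      ring
    rw [pow_succ', Module.End.mul_apply, ih, map_smul, opL_e, smul_smul, hcoeff,
      ← ascPochhammer_succ_eval, Nat.cast_succ, add_assoc]

theorem opL_pow_sub_e {l k p : ℕ} (hpl : 2 * p ≤ l) (hlk : l ≤ k) :
    (opL ^ (k - l)) (e l p) =
      (((k - 2 * p).factorial : ℝ) / ((l - 2 * p).factorial : ℝ)) • e k p := by
  have hstart : ((l - 2 * p + 1 : ℤ) : ℝ) = ((l - 2 * p : ℕ) : ℝ) + 1 := by
    push_cast [Nat.cast_sub hpl]
    ring
  have hend : l - 2 * p + (k - l) = k - 2 * p := by omega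
  rw [opL_pow_e, hstart, ascPochhammer_eval_natCast_add_one, hend, Nat.cast_sub hlk,
    add_sub_cancel]

theorem stmt13 (n k r : ℕ) (hrn : 2 * r ≤ n) (hrk : 2 * r ≤ k) :
    piElt n k r =
      ((-1 : ℝ) ^ r * (Nat.doubleFactorial (2 * n - 4 * r + 1) : ℝ)) •
        ∑ i ∈ Finset.range (r + 1),
          ((-1 : ℝ) ^ i * ((k - 2 * i).factorial : ℝ) / ((2 * r - 2 * i).factorial : ℝ) *
              (Nat.doubleFactorial (2 * r - 2 * i - 1) : ℝ) /
              (Nat.doubleFactorial (2 * n - 2 * r - 2 * i + 1) : ℝ)) •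
            e (k : ℤ) (i : ℤ) := by
  rw [piElt, piBase, map_smul, map_sum]
  congr 1
  refine Finset.sum_congr rfl fun i hi => ?_
  have hir : 2 * i ≤ 2 * r := by
    have := Finset.mem_range.mp hi
    omega
  have hpow : (opL ^ (k - 2 * r)) (e (2 * r : ℤ) i) =
      (((k - 2 * i).factorial : ℝ) / ((2 * r - 2 * i).factorial : ℝ)) • e k i := by
    exact_mod_cast opL_pow_sub_e hir hrk
  rw [map_smul, hpow, smul_smul]
  congr 1
  ring
end

section
/- For every integer n ≥ 3, the Tasaki matrix T^n_3 is given by T(n,3,0,0) = c·(2n−3), T(n,3,0,1) = T(n,3,1,0) = −c, and T(n,3,1,1) = c·(2n−1)/3, where c := 2^{n−2}·(n−3)!/(n·π·(2n−3)!!). -/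
/-- `ω m` is the volume of the `m`-dimensional unit euclidean ball: `π^(m/2)/Γ(m/2+1)`. -/
noncomputable def ω (m : ℕ) : ℝ :=
  Real.pi ^ ((m : ℝ) / 2) / Real.Gamma ((m : ℝ) / 2 + 1)

/-- The `(i,j)` entry of the Tasaki matrix `T^n_k`:
`T(n,k,i,j) = (-1)^(i+j) ⬝ (ω_k ω_{2n-k} / πⁿ) ⬝ ∑_{r = max(i,j)}^{⌊k/2⌋} [⋯]`.
All inner subtractions are natural-number subtractions, which agree with the integer
values in the intended range `k ≤ n`, `i, j ≤ ⌊k/2⌋`; the truncation `(2r-2i-1)‼` for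
`i = r` gives `0‼ = 1`, matching the convention `(-1)‼ = 1`. -/
noncomputable def T (n k i j : ℕ) : ℝ :=
  (-1 : ℝ) ^ (i + j) * (ω k * ω (2 * n - k) / Real.pi ^ n) *
    ∑ r ∈ Finset.Icc (max i j) (k / 2),
      (1 / (n.choose (2 * r) : ℝ)) *
        (((2 * n - 2 * r - k).factorial * (n - r).factorial * (k - 2 * i).factorial *
            (k - 2 * j).factorial : ℕ) : ℝ) /
        ((8 ^ r * (k - 2 * r).factorial * (2 * n - 4 * r).factorial *
            (2 * r - 2 * i).factorial * (2 * r - 2 * j).factorial : ℕ) : ℝ) *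
        ((Nat.doubleFactorial (2 * n - 2 * r + 1) * Nat.doubleFactorial (2 * n - 4 * r + 1) *
            Nat.doubleFactorial (2 * r - 2 * i - 1) *
            Nat.doubleFactorial (2 * r - 2 * j - 1) : ℕ) : ℝ) /
        ((Nat.doubleFactorial (2 * n - 2 * r - 2 * i + 1) *
            Nat.doubleFactorial (2 * n - 2 * r - 2 * j + 1) : ℕ) : ℝ)

/-!
The `r`-th summand of `T n k i j` depends on `i` and `j` only through factors `v_{r,i}` and
`v_{r,j}` of the same shape, so the Tasaki matrix is a positive multiple of a combination
`∑_r A_r v_r v_rᵀ` of rank one matrices, where the coordinates of `v_r` beyond the `r`-th are read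
as zero. The double factorials collapse through `(2m+1)! = (2m+1)‼ 2^m m!`, which turns `A_r` and
`v_{r,i}` into short closed forms. For `k = 3` only `r = 0` and `r = 1` occur: every entry other
than `(0,0)` comes from `A_1 v_1 v_1ᵀ` alone, while the two contributions to the `(0,0)` entry are
`4n(n-2)c/(2n-1)` and `3c/(2n-1)`, whose sum is `c(2n-3)` because
`4n² - 8n + 3 = (2n-1)(2n-3)`.
-/

section

open scoped Nat Real

lemma two_mul_natCast_sub_one_ne_zero (n : ℕ) : 2 * (n : ℝ) - 1 ≠ 0 := by
  rw [sub_ne_zero]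
  norm_cast
  omega

lemma factorial_two_mul_add_one (m : ℕ) : (2 * m + 1)! = (2 * m + 1)‼ * (2 ^ m * m !) := by
  rw [Nat.factorial_eq_mul_doubleFactorial, Nat.doubleFactorial_two_mul]

lemma doubleFactorial_two_mul_sub_one_div_factorial (m : ℕ) :
    ((2 * m - 1)‼ : ℝ) / (2 * m)! = 1 / (2 ^ m * m !) := by
  have h : (2 * m)! = 2 ^ m * m ! * (2 * m - 1)‼ := by
    cases m with
    | zero => rfl
    | succ m =>
      rw [← Nat.doubleFactorial_two_mul]
      exact Nat.factorial_eq_mul_doubleFactorial (2 * m + 1)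
  rw [h]
  push_cast
  field_simp

lemma doubleFactorial_two_mul_add_one_div_factorial (m : ℕ) :
    ((2 * m + 1)‼ : ℝ) / (2 * m)! = (2 * m + 1) / (2 ^ m * m !) := by
  have h := factorial_two_mul_add_one m
  rw [Nat.factorial_succ] at h
  rw [div_eq_div_iff (by positivity) (by positivity)]
  exact_mod_cast h.symm

lemma ω_two_mul_add_one (k : ℕ) : ω (2 * k + 1) = π ^ k * 2 ^ (k + 1) / (2 * k + 1)‼ := by
  have hhalf : ((2 * k + 1 : ℕ) : ℝ) / 2 = k + 1 / 2 := by push_cast; ring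
  rw [ω, hhalf, add_right_comm, Real.Gamma_nat_add_one_add_half, Real.rpow_add Real.pi_pos,
    Real.rpow_natCast, ← Real.sqrt_eq_rpow]
  field_simp

lemma ω_odd_mul_ω_odd_div_pi_pow (a b : ℕ) :
    ω (2 * a + 1) * ω (2 * b + 1) / π ^ (a + b + 1) =
      2 ^ (a + b + 2) / (π * (2 * a + 1)‼ * (2 * b + 1)‼) := by
  rw [ω_two_mul_add_one, ω_two_mul_add_one]
  field_simp
  ring

/-- The weight `A_r` in the decomposition
`T^n_k = (ω_k ω_{2n-k} / πⁿ) ∑_r A_r v_r v_rᵀ` of the Tasaki matrix into matrices of rank one.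
The subtractions are exact when `2r ≤ k ≤ n`. -/
noncomputable def tasakiWeight (n k r : ℕ) : ℝ :=
  (2 * r)! * (2 * (n - 2 * r : ℕ) + 1) * (2 * n - 2 * r - k)! * (2 * (n - r) + 1)! /
    (4 ^ n * n ! * (k - 2 * r)!)

/-- The `i`-th coordinate of the vector `v_r` in the decomposition
`T^n_k = (ω_k ω_{2n-k} / πⁿ) ∑_r A_r v_r v_rᵀ` of the Tasaki matrix into matrices of rank one.
The sign `(-1)^(i+j)` of the entry `T n k i j` is distributed over `v_{r,i}` and `v_{r,j}`. Only the
values with `i ≤ r` and `2r ≤ k ≤ n`, where the subtractions are exact, are meaningful: for `i > r`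
the coordinate in the decomposition is zero, which is not the value of this formula. -/
noncomputable def tasakiVec (n k r i : ℕ) : ℝ :=
  (-1) ^ i * (k - 2 * i)! / (2 ^ (r - i) * (r - i)! * (2 * n - 2 * r - 2 * i + 1)‼)

lemma tasakiWeight_eq_doubleFactorial_div_factorial {n r : ℕ} (k : ℕ) (hr : 2 * r ≤ n) :
    tasakiWeight n k r =
      1 / n.choose (2 * r) * ((2 * n - 2 * r - k)! * (n - r)! / (8 ^ r * (k - 2 * r)!)) *
        (2 * (n - r) + 1)‼ * ((2 * (n - 2 * r) + 1)‼ / (2 * (n - 2 * r))!) := by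
  have hchoose : (n ! : ℝ) = n.choose (2 * r) * (2 * r)! * (n - 2 * r)! :=
    mod_cast (Nat.choose_mul_factorial_mul_factorial hr).symm
  have hpow : (4 : ℝ) ^ n = 2 ^ (n - r) * 2 ^ (n - 2 * r) * 8 ^ r := by
    rw [show (4 : ℝ) = 2 ^ 2 by norm_num, show (8 : ℝ) = 2 ^ 3 by norm_num, ← pow_mul, ← pow_mul,
      ← pow_add, ← pow_add]
    congr 1
    omega
  have hchoose_ne : (n.choose (2 * r) : ℝ) ≠ 0 := mod_cast (Nat.choose_pos hr).ne'
  rw [doubleFactorial_two_mul_add_one_div_factorial, tasakiWeight, factorial_two_mul_add_one,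
    hchoose, hpow]
  push_cast
  field_simp

lemma tasakiVec_eq_doubleFactorial_div_factorial (n k r i : ℕ) :
    tasakiVec n k r i =
      (-1) ^ i * (k - 2 * i)! * ((2 * (r - i) - 1)‼ / (2 * (r - i))!) /
        (2 * n - 2 * r - 2 * i + 1)‼ := by
  rw [doubleFactorial_two_mul_sub_one_div_factorial, tasakiVec]
  ring

theorem T_eq_sum_tasakiWeight_mul_tasakiVec {n k : ℕ} (hk : k ≤ n) (i j : ℕ) :
    T n k i j = ω k * ω (2 * n - k) / π ^ n *
      ∑ r ∈ Finset.Icc (max i j) (k / 2),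
        tasakiWeight n k r * tasakiVec n k r i * tasakiVec n k r j := by
  rw [T, mul_comm ((-1) ^ (i + j)), mul_assoc, Finset.mul_sum]
  congr 1
  refine Finset.sum_congr rfl fun r hr ↦ ?_
  have hrn : 2 * r ≤ n := by
    have := (Finset.mem_Icc.mp hr).2
    omega
  have hn4 : 2 * n - 4 * r = 2 * (n - 2 * r) := by omega
  rw [tasakiWeight_eq_doubleFactorial_div_factorial k hrn,
    tasakiVec_eq_doubleFactorial_div_factorial, tasakiVec_eq_doubleFactorial_div_factorial, hn4,
    ← Nat.mul_sub, ← Nat.mul_sub, ← Nat.mul_sub]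
  push_cast
  ring

lemma T_comm (n k i j : ℕ) : T n k i j = T n k j i := by
  rw [T, T, max_comm, add_comm i j]
  congr 1
  refine Finset.sum_congr rfl fun r _ ↦ ?_
  push_cast
  ring

/-- The common scale `c` of the entries of the Tasaki matrix `T^n_3`, for `n ≥ 3`. -/
noncomputable def tasakiThreeScale (n : ℕ) : ℝ :=
  2 ^ (n - 2) * (n - 3)! / (n * π * (2 * n - 3)‼)

lemma ω_three_mul_ω_div_pi_pow {n : ℕ} (hn : 2 ≤ n) :
    ω 3 * ω (2 * n - 3) / π ^ n = 2 ^ (n + 1) / (3 * π * (2 * n - 3)‼) := by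
  obtain ⟨m, rfl⟩ := Nat.exists_eq_add_of_le hn
  have hsub : 2 * (2 + m) - 3 = 2 * m + 1 := by omega
  have h := ω_odd_mul_ω_odd_div_pi_pow 1 m
  rw [show 1 + m + 1 = 2 + m by ring, show 1 + m + 2 = 2 + m + 1 by ring] at h
  rw [hsub, mul_comm 3 π]
  exact_mod_cast h

lemma ω_three_mul_ω_div_pi_pow_mul_tasakiWeight_zero {n : ℕ} (hn : 3 ≤ n) :
    ω 3 * ω (2 * n - 3) / π ^ n * tasakiWeight n 3 0 =
      tasakiThreeScale n * (n * (n - 2) * (2 * n + 1)‼ ^ 2) / (9 * (2 * n - 1)) := by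
  rw [ω_three_mul_ω_div_pi_pow (by omega)]
  obtain ⟨m, rfl⟩ := Nat.exists_eq_add_of_le' hn
  have hsub : 2 * (m + 3) - 3 = 2 * (m + 1) + 1 := by omega
  have hodd : (2 * (m + 3) + 1)‼ = (2 * m + 7) * ((2 * m + 5) * (2 * (m + 1) + 1)‼) := rfl
  have hpow : (4 : ℝ) ^ (m + 3) = 2 ^ (m + 3) * 2 ^ (m + 3) := by rw [← mul_pow]; norm_num
  have hne : 2 * (m + 3 : ℝ) - 1 ≠ 0 := mod_cast two_mul_natCast_sub_one_ne_zero (m + 3)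
  rw [tasakiWeight, tasakiThreeScale, mul_zero, Nat.sub_zero, Nat.sub_zero, Nat.sub_zero, hsub,
    factorial_two_mul_add_one, factorial_two_mul_add_one, hodd, hpow, Nat.factorial_succ m,
    Nat.add_sub_cancel, show m + 3 - 2 = m + 1 by omega, show 3 ! = 6 by rfl, Nat.factorial_zero]
  push_cast
  field_simp
  ring

lemma ω_three_mul_ω_div_pi_pow_mul_tasakiWeight_one {n : ℕ} (hn : 3 ≤ n) :
    ω 3 * ω (2 * n - 3) / π ^ n * tasakiWeight n 3 1 =
      tasakiThreeScale n * ((2 * n - 1) * (2 * n - 3)‼ ^ 2) / 3 := by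
  rw [ω_three_mul_ω_div_pi_pow (by omega)]
  obtain ⟨m, rfl⟩ := Nat.exists_eq_add_of_le' hn
  have hsub : 2 * (m + 3) - 3 = 2 * m + 3 := by omega
  have hsub' : 2 * (m + 3) - 2 * 1 - 3 = 2 * m + 1 := by omega
  have hodd : (2 * (m + 2) + 1)‼ = (2 * m + 5) * (2 * m + 3)‼ := rfl
  have hodd' : (2 * m + 3)‼ = (2 * m + 3) * (2 * m + 1)‼ := rfl
  have hpow : (4 : ℝ) ^ (m + 3) = 2 ^ (m + 3) * 2 ^ (m + 3) := by rw [← mul_pow]; norm_num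
  rw [tasakiWeight, tasakiThreeScale, hsub, hsub', show m + 3 - 2 * 1 = m + 1 by omega,
    show m + 3 - 1 = m + 2 by omega, factorial_two_mul_add_one, factorial_two_mul_add_one, hodd,
    hodd', hpow, Nat.factorial_succ (m + 2), Nat.add_sub_cancel]
  push_cast
  field_simp
  ring

lemma tasakiVec_three_zero_zero (n : ℕ) : tasakiVec n 3 0 0 = 6 / (2 * n + 1)‼ := by
  norm_num [tasakiVec, Nat.factorial]

lemma tasakiVec_three_one_zero {n : ℕ} (hn : 2 ≤ n) :
    tasakiVec n 3 1 0 = 3 / ((2 * n - 1) * (2 * n - 3)‼) := by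
  obtain ⟨m, rfl⟩ := Nat.exists_eq_add_of_le' hn
  have hodd : (2 * (m + 2) - 2 * 1 + 1)‼ = (2 * m + 3) * (2 * (m + 2) - 3)‼ := rfl
  have hne : 2 * (m + 2 : ℝ) - 1 ≠ 0 := mod_cast two_mul_natCast_sub_one_ne_zero (m + 2)
  rw [tasakiVec, mul_zero, Nat.sub_zero, Nat.sub_zero, Nat.sub_zero, hodd, show 3 ! = 6 by rfl]
  push_cast
  field_simp
  norm_num
  ring

lemma tasakiVec_three_one_one {n : ℕ} (hn : 2 ≤ n) :
    tasakiVec n 3 1 1 = -1 / (2 * n - 3)‼ := by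
  have hsub : 2 * n - 2 - 2 + 1 = 2 * n - 3 := by omega
  simp [tasakiVec, hsub]

lemma T_three_zero_zero {n : ℕ} (hn : 3 ≤ n) :
    T n 3 0 0 = tasakiThreeScale n * (2 * n - 3) := by
  have hne := two_mul_natCast_sub_one_ne_zero n
  have hzero : ω 3 * ω (2 * n - 3) / π ^ n *
      (tasakiWeight n 3 0 * tasakiVec n 3 0 0 * tasakiVec n 3 0 0) =
        tasakiThreeScale n * (4 * n * (n - 2)) / (2 * n - 1) := by
    rw [← mul_assoc, ← mul_assoc, ω_three_mul_ω_div_pi_pow_mul_tasakiWeight_zero hn,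
      tasakiVec_three_zero_zero]
    field_simp
    ring
  have hone : ω 3 * ω (2 * n - 3) / π ^ n *
      (tasakiWeight n 3 1 * tasakiVec n 3 1 0 * tasakiVec n 3 1 0) =
        tasakiThreeScale n * 3 / (2 * n - 1) := by
    rw [← mul_assoc, ← mul_assoc, ω_three_mul_ω_div_pi_pow_mul_tasakiWeight_one hn,
      tasakiVec_three_one_zero (by omega)]
    field_simp
  rw [T_eq_sum_tasakiWeight_mul_tasakiVec hn, show Finset.Icc (max 0 0) (3 / 2) = {0, 1} by rfl,
    Finset.sum_pair zero_ne_one, mul_add, hzero, hone, ← add_div, div_eq_iff hne]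
  ring

lemma T_three_of_max_eq_one {n i j : ℕ} (hn : 3 ≤ n) (hij : max i j = 1) :
    T n 3 i j = tasakiThreeScale n * ((2 * n - 1) * (2 * n - 3)‼ ^ 2) / 3 *
      tasakiVec n 3 1 i * tasakiVec n 3 1 j := by
  rw [T_eq_sum_tasakiWeight_mul_tasakiVec hn, hij, show Finset.Icc 1 (3 / 2) = {1} by rfl,
    Finset.sum_singleton, ← mul_assoc, ← mul_assoc,
    ω_three_mul_ω_div_pi_pow_mul_tasakiWeight_one hn]

lemma T_three_zero_one {n : ℕ} (hn : 3 ≤ n) : T n 3 0 1 = -tasakiThreeScale n := by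
  have hne := two_mul_natCast_sub_one_ne_zero n
  rw [T_three_of_max_eq_one hn rfl, tasakiVec_three_one_zero (by omega),
    tasakiVec_three_one_one (by omega)]
  field_simp

lemma T_three_one_one {n : ℕ} (hn : 3 ≤ n) :
    T n 3 1 1 = tasakiThreeScale n * (2 * n - 1) / 3 := by
  rw [T_three_of_max_eq_one hn rfl, tasakiVec_three_one_one (by omega)]
  field_simp

end

theorem stmt18 (n : ℕ) (hn : 3 ≤ n) :
    T n 3 0 0 =
      (2 ^ (n - 2) * ((n - 3).factorial : ℝ) /
        (n * Real.pi * (Nat.doubleFactorial (2 * n - 3) : ℝ))) * (2 * (n : ℝ) - 3) ∧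
    T n 3 0 1 =
      -(2 ^ (n - 2) * ((n - 3).factorial : ℝ) /
        (n * Real.pi * (Nat.doubleFactorial (2 * n - 3) : ℝ))) ∧
    T n 3 1 0 =
      -(2 ^ (n - 2) * ((n - 3).factorial : ℝ) /
        (n * Real.pi * (Nat.doubleFactorial (2 * n - 3) : ℝ))) ∧
    T n 3 1 1 =
      (2 ^ (n - 2) * ((n - 3).factorial : ℝ) /
        (n * Real.pi * (Nat.doubleFactorial (2 * n - 3) : ℝ))) * (2 * (n : ℝ) - 1) / 3 := by
  exact ⟨T_three_zero_zero hn, T_three_zero_one hn, (T_comm n 3 1 0).trans (T_three_zero_one hn),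
    T_three_one_one hn⟩
end
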